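/- For each α > 0 let Z(α) = ∫_ℝ exp(−ℓ_{SPH,α}(t)) dt, which is finite and positive, and let f_α(ε) = exp(−ℓ_{SPH,α}(ε))/Z(α) be the generalized error density associated with the SPH loss. Then for every fixed ε ∈ ℝ, f_α(ε) → (1/√(2π))·exp(−ε²/2) as α → ∞; that is, the SPH generalized density converges pointwise to the standard normal density as α tends to infinity. -/

import Mathlib

open MeasureTheory Real Set Filter

/-- The scaled pseudo-Huber (SPH) loss. -/
noncomputable def lSPH (α t : ℝ) : ℝ :=
  α * Real.sqrt (α ^ 2 + 1) * (Real.sqrt (1 + t ^ 2 / α ^ 2) - 1)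

/-!
Rationalizing the square root gives
`lSPH α t = √(1 + 1 / α ^ 2) * (t ^ 2 / (√(1 + t ^ 2 / α ^ 2) + 1))`, which tends to `t ^ 2 / 2` as
`α → ∞`. On the other hand `m * |t| - m ^ 2 ≤ lSPH α t` whenever `0 < m ≤ α`, so the functions
`exp (-lSPH α ·)` with `α ≥ 1` are all dominated by one Laplace density up to a constant factor.
Dominated convergence then carries the normalizing constants to the Gaussian integral `√(2 * π)`.
-/

lemma integrable_exp_neg_mul_abs {c : ℝ} (hc : 0 < c) :
    Integrable fun t : ℝ => exp (-(c * |t|)) := by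
  rw [← integrableOn_univ, ← Iic_union_Ioi (a := (0 : ℝ))]
  refine IntegrableOn.union ?_ ?_
  · refine (integrableOn_exp_mul_Iic hc 0).congr_fun (fun t ht => ?_) measurableSet_Iic
    simp only [abs_of_nonpos (mem_Iic.1 ht), mul_neg, neg_neg]
  · refine (integrableOn_exp_mul_Ioi (neg_lt_zero.2 hc) 0).congr_fun (fun t ht => ?_)
      measurableSet_Ioi
    simp only [abs_of_pos (mem_Ioi.1 ht), neg_mul]

lemma sqrt_one_add_sub_one_eq_div {x : ℝ} (hx : -1 ≤ x) : √(1 + x) - 1 = x / (√(1 + x) + 1) := by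
  rw [eq_div_iff (by positivity)]
  linear_combination sq_sqrt (neg_le_iff_add_nonneg'.1 hx)

lemma tendsto_sqrt_one_add_div_sq_atTop (c : ℝ) :
    Tendsto (fun α : ℝ => √(1 + c / α ^ 2)) atTop (nhds 1) := by
  have h : Tendsto (fun α : ℝ => c / α ^ 2) atTop (nhds 0) :=
    tendsto_const_nhds.div_atTop (tendsto_pow_atTop two_ne_zero)
  simpa using (h.const_add 1).sqrt

lemma continuous_lSPH (α : ℝ) : Continuous (lSPH α) := by
  unfold lSPH
  fun_prop

lemma lSPH_eq_sqrt_mul_div {α : ℝ} (hα : 0 < α) (t : ℝ) :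
    lSPH α t = √(1 + 1 / α ^ 2) * (t ^ 2 / (√(1 + t ^ 2 / α ^ 2) + 1)) := by
  have hx : -1 ≤ t ^ 2 / α ^ 2 := neg_one_lt_zero.le.trans (by positivity)
  have hsqrt : √(α ^ 2 + 1) = α * √(1 + 1 / α ^ 2) := by
    rw [show α ^ 2 + 1 = α ^ 2 * (1 + 1 / α ^ 2) by field_simp, sqrt_mul (sq_nonneg α),
      sqrt_sq hα.le]
  rw [lSPH, hsqrt, sqrt_one_add_sub_one_eq_div hx]
  field_simp

lemma tendsto_lSPH_atTop (t : ℝ) :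
    Tendsto (fun α : ℝ => lSPH α t) atTop (nhds (t ^ 2 / 2)) := by
  have h : Tendsto (fun α : ℝ => √(1 + 1 / α ^ 2) * (t ^ 2 / (√(1 + t ^ 2 / α ^ 2) + 1))) atTop
      (nhds (1 * (t ^ 2 / (1 + 1)))) :=
    (tendsto_sqrt_one_add_div_sq_atTop 1).mul <|
      tendsto_const_nhds.div ((tendsto_sqrt_one_add_div_sq_atTop (t ^ 2)).add_const 1) (by norm_num)
  rw [one_mul, one_add_one_eq_two] at h
  refine h.congr' ?_
  filter_upwards [eventually_gt_atTop 0] with α hα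
  exact (lSPH_eq_sqrt_mul_div hα t).symm

lemma tendsto_exp_neg_lSPH_atTop (t : ℝ) :
    Tendsto (fun α : ℝ => exp (-(lSPH α t))) atTop (nhds (exp (-(t ^ 2) / 2))) := by
  rw [neg_div]
  exact (tendsto_lSPH_atTop t).neg.rexp

lemma mul_abs_sub_sq_le_lSPH {m α : ℝ} (hm : 0 < m) (hmα : m ≤ α) (t : ℝ) :
    m * |t| - m ^ 2 ≤ lSPH α t := by
  have hα : 0 < α := hm.trans_le hmα
  have hsq : m ^ 2 ≤ α ^ 2 := by gcongr
  have hα_le : α ≤ √(α ^ 2 + 1) := le_sqrt_of_sq_le (by linarith)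
  have hfactor : 0 ≤ √(1 + t ^ 2 / α ^ 2) - 1 :=
    sub_nonneg.2 (one_le_sqrt.2 (le_add_of_nonneg_right (by positivity)))
  have hsqrt_sq : (α ^ 2 * √(1 + t ^ 2 / α ^ 2)) ^ 2 = α ^ 2 * (α ^ 2 + |t| ^ 2) := by
    rw [mul_pow, sq_sqrt (by positivity), sq_abs]
    field_simp
  -- The difference of the squares is `(α ^ 2 - m ^ 2) * (|t| - m) ^ 2 + m ^ 2 * α ^ 2`.
  have hlinear : α ^ 2 - m ^ 2 + m * |t| ≤ α ^ 2 * √(1 + t ^ 2 / α ^ 2) := by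
    refine le_of_sq_le_sq ?_ (by positivity)
    rw [hsqrt_sq]
    linarith [mul_nonneg (sub_nonneg.2 hsq) (sq_nonneg (|t| - m)),
      mul_nonneg (sq_nonneg m) (sq_nonneg α)]
  calc m * |t| - m ^ 2 ≤ α * α * (√(1 + t ^ 2 / α ^ 2) - 1) := by linarith
    _ ≤ α * √(α ^ 2 + 1) * (√(1 + t ^ 2 / α ^ 2) - 1) := by gcongr
    _ = lSPH α t := rfl

lemma norm_exp_neg_lSPH_le {m α : ℝ} (hm : 0 < m) (hmα : m ≤ α) (t : ℝ) :
    ‖exp (-(lSPH α t))‖ ≤ exp (m ^ 2) * exp (-(m * |t|)) := by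
  rw [norm_of_nonneg (exp_nonneg _), ← exp_add, exp_le_exp]
  linarith [mul_abs_sub_sq_le_lSPH hm hmα t]

lemma integrable_exp_neg_lSPH {α : ℝ} (hα : 0 < α) :
    Integrable fun t : ℝ => exp (-(lSPH α t)) :=
  ((integrable_exp_neg_mul_abs hα).const_mul _).mono'
    (continuous_lSPH α).neg.rexp.aestronglyMeasurable
    (ae_of_all _ (norm_exp_neg_lSPH_le hα le_rfl))

lemma integral_exp_neg_sq_div_two : ∫ t : ℝ, exp (-(t ^ 2) / 2) = √(2 * π) := by
  convert integral_gaussian (1 / 2) using 3 <;> ring_nf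

lemma tendsto_integral_exp_neg_lSPH_atTop :
    Tendsto (fun α : ℝ => ∫ t : ℝ, exp (-(lSPH α t))) atTop (nhds √(2 * π)) := by
  rw [← integral_exp_neg_sq_div_two]
  refine tendsto_integral_filter_of_dominated_convergence
    (fun t => exp (1 ^ 2) * exp (-(1 * |t|)))
    (Eventually.of_forall fun α => (continuous_lSPH α).neg.rexp.aestronglyMeasurable) ?_
    ((integrable_exp_neg_mul_abs one_pos).const_mul _) (ae_of_all _ tendsto_exp_neg_lSPH_atTop)
  filter_upwards [eventually_ge_atTop 1] with α hα
  exact ae_of_all _ (norm_exp_neg_lSPH_le one_pos hα)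

/-- For each `α > 0` the SPH generalized density
`f_α(ε) = exp(-lSPH α ε) / Z(α)` (with `Z(α) = ∫ exp(-lSPH α t) dt` finite and positive)
converges pointwise, as `α → ∞`, to the standard normal density `(1/√(2π)) exp(-ε²/2)`. -/
theorem sph_density_tendsto_gaussian (ε : ℝ) :
    (∀ α : ℝ, 0 < α →
      Integrable (fun t : ℝ => Real.exp (-(lSPH α t))) ∧
        0 < ∫ t : ℝ, Real.exp (-(lSPH α t))) ∧
    Tendsto
      (fun α : ℝ => Real.exp (-(lSPH α ε)) / ∫ t : ℝ, Real.exp (-(lSPH α t)))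
      atTop (nhds ((1 / Real.sqrt (2 * π)) * Real.exp (-(ε ^ 2) / 2))) := by
  refine ⟨fun α hα => ?_, ?_⟩
  · have hint := integrable_exp_neg_lSPH hα
    exact ⟨hint, integral_exp_pos hint⟩
  · rw [one_div_mul_eq_div]
    exact (tendsto_exp_neg_lSPH_atTop ε).div tendsto_integral_exp_neg_lSPH_atTop (by positivity)
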